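/- Let 0 < μ < 1 be a fixed real number and n ≥ 1 a fixed integer, and for γ > 0 define F(γ) = n(1−μ)²/(μ(n+γ−1)) · Σ_{k=0}^{n-1} ((1−n)_k/(2−n−γ)_k) μ^k. Then lim_{γ→0⁺} γ·F(γ) = n(1−μ)² μ^{n−2}; that is, the relative Fisher information of the Meixner polynomials diverges as F(γ) ~ (n/γ)(1−μ)² μ^{n−2} when γ → 0. -/

import Mathlib

/-- Pochhammer symbol `(a)_k = a(a+1)⋯(a+k-1)`. -/
noncomputable def poch (a : ℝ) (k : ℕ) : ℝ := ∏ i ∈ Finset.range k, (a + i)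

/-!
The prefactor `1 / (n + γ - 1)` is absorbed by the denominators of the sum, because
`(1 - n - γ) (2 - n - γ)_k = (1 - n - γ)_{k+1}`. Among the resulting denominators only the one with
`k = n - 1` vanishes at `γ = 0`, through its last factor `-γ`; hence after multiplication by `γ`
only the term of index `n - 1` contributes to the limit.
-/

open Filter Finset Topology

theorem poch_succ (a : ℝ) (k : ℕ) : poch a (k + 1) = poch a k * (a + k) :=
  prod_range_succ _ _

theorem poch_succ_left (a : ℝ) (k : ℕ) : poch a (k + 1) = a * poch (a + 1) k := by
  simp only [poch, prod_range_succ', Nat.cast_add, Nat.cast_one, Nat.cast_zero, add_zero,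
    add_assoc, add_comm (1 : ℝ), mul_comm a]

theorem continuous_poch (k : ℕ) : Continuous fun a : ℝ => poch a k := by
  unfold poch
  fun_prop

theorem poch_neg_natCast_ne_zero {m k : ℕ} (h : k ≤ m) : poch (-(m : ℝ)) k ≠ 0 := by
  refine prod_ne_zero_iff.2 fun i hi => ?_
  have hi_lt : (i : ℝ) < m := by exact_mod_cast (mem_range.1 hi).trans_le h
  linarith

theorem tendsto_div_poch_sub {a : ℝ} {k : ℕ} (h : poch a k ≠ 0) (c : ℝ) :
    Tendsto (fun γ : ℝ => c / poch (a - γ) k) (𝓝 0) (𝓝 (c / poch a k)) := by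
  have hpoch : Tendsto (fun γ : ℝ => poch (a - γ) k) (𝓝 0) (𝓝 (poch a k)) :=
    ((continuous_poch k).comp (continuous_sub_left a)).tendsto' 0 _ (by simp)
  exact tendsto_const_nhds.div hpoch h

theorem tendsto_mul_div_poch_sub {a : ℝ} {k : ℕ} (h : poch a k ≠ 0) (c : ℝ) :
    Tendsto (fun γ : ℝ => γ * (c / poch (a - γ) k)) (𝓝 0) (𝓝 0) := by
  simpa only [id, zero_mul] using tendsto_id.mul (tendsto_div_poch_sub h c)

theorem tendsto_mul_poch_div_poch_succ (m : ℕ) :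
    Tendsto (fun γ : ℝ => γ * (poch (-(m : ℝ)) m / poch (-(m : ℝ) - γ) (m + 1)))
      (𝓝[≠] 0) (𝓝 (-1)) := by
  have hm : poch (-(m : ℝ)) m ≠ 0 := poch_neg_natCast_ne_zero le_rfl
  have hlim := (tendsto_div_poch_sub hm (poch (-(m : ℝ)) m)).neg.mono_left
    (nhdsWithin_le_nhds (s := {0}ᶜ))
  rw [div_self hm] at hlim
  refine hlim.congr' ?_
  filter_upwards [self_mem_nhdsWithin] with γ (hγ : γ ≠ 0)
  have hlast : -(m : ℝ) - γ + m = -γ := by ring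
  rw [poch_succ, hlast]
  field_simp

theorem tendsto_mul_sum_poch_div_poch_succ (m : ℕ) (w : ℕ → ℝ) :
    Tendsto
      (fun γ : ℝ => γ * ∑ k ∈ range (m + 1), poch (-(m : ℝ)) k / poch (-(m : ℝ) - γ) (k + 1) * w k)
      (𝓝[≠] 0) (𝓝 (-w m)) := by
  have hlower : Tendsto
      (fun γ : ℝ => ∑ k ∈ range m, γ * (poch (-(m : ℝ)) k / poch (-(m : ℝ) - γ) (k + 1)) * w k)
      (𝓝[≠] 0) (𝓝 (∑ k ∈ range m, 0 * w k)) :=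
    tendsto_finsetSum _ fun k hk =>
      ((tendsto_mul_div_poch_sub (poch_neg_natCast_ne_zero (mem_range.1 hk)) _).mono_left
        nhdsWithin_le_nhds).mul_const _
  have htop := (tendsto_mul_poch_div_poch_succ m).mul_const (w m)
  simpa only [zero_mul, sum_const_zero, zero_add, neg_one_mul, sum_range_succ, mul_add, mul_sum,
    mul_assoc] using hlower.add htop

theorem sum_div_poch_succ (s : Finset ℕ) (a : ℝ) (c w : ℕ → ℝ) :
    ∑ k ∈ s, c k / poch a (k + 1) * w k = (∑ k ∈ s, c k / poch (a + 1) k * w k) / a := by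
  rw [sum_div]
  refine sum_congr rfl fun k _ => ?_
  rw [poch_succ_left, mul_comm a, ← div_div, div_mul_eq_mul_div]

theorem meixner_fisher_gamma_to_zero_general {μ : ℝ} (hμ : μ ≠ 0) (n : ℕ) :
    Tendsto
      (fun γ : ℝ => γ *
        ((n : ℝ) * (1 - μ) ^ 2 / (μ * ((n : ℝ) + γ - 1)) *
          ∑ k ∈ range n, poch (1 - (n : ℝ)) k / poch (2 - (n : ℝ) - γ) k * μ ^ k))
      (𝓝[≠] 0) (𝓝 ((n : ℝ) * (1 - μ) ^ 2 * μ ^ ((n : ℤ) - 2))) := by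
  obtain _ | m := n
  · simp
  have hlim := (tendsto_mul_sum_poch_div_poch_succ m (μ ^ ·)).const_mul
    (-((m + 1 : ℕ) * (1 - μ) ^ 2 / μ))
  have hpow : μ ^ (((m + 1 : ℕ) : ℤ) - 2) = μ ^ m / μ := by
    have hexp : ((m + 1 : ℕ) : ℤ) - 2 = m - 1 := by push_cast; ring
    rw [hexp, zpow_sub_one₀ hμ, zpow_natCast, div_eq_mul_inv]
  convert hlim using 2 with γ
  · have hnum : 1 - ((m + 1 : ℕ) : ℝ) = -m := by push_cast; ring
    have hden : 2 - ((m + 1 : ℕ) : ℝ) - γ = -m - γ + 1 := by push_cast; ring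
    have hpre : ((m + 1 : ℕ) : ℝ) + γ - 1 = -(-m - γ) := by push_cast; ring
    rw [sum_div_poch_succ, hnum, hden, hpre, mul_neg, div_neg, ← div_div]
    ring
  · rw [hpow]
    ring

/-- Asymptotics of the relative Fisher information of the Meixner polynomials as
`γ → 0⁺`: `F(γ) ~ (n/γ)(1-μ)² μ^{n-2}`. -/
theorem meixner_fisher_gamma_to_zero
    (μ : ℝ) (hμ0 : 0 < μ) (hμ1 : μ < 1) (n : ℕ) (hn : 1 ≤ n) :
    Filter.Tendsto
      (fun γ : ℝ => γ *
        ((n : ℝ) * (1 - μ) ^ 2 / (μ * ((n : ℝ) + γ - 1)) *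
          ∑ k ∈ Finset.range n, poch (1 - (n : ℝ)) k / poch (2 - (n : ℝ) - γ) k * μ ^ k))
      (nhdsWithin 0 (Set.Ioi 0))
      (nhds ((n : ℝ) * (1 - μ) ^ 2 * μ ^ ((n : ℤ) - 2))) :=
  (meixner_fisher_gamma_to_zero_general hμ0.ne' n).mono_left (nhdsGT_le_nhdsNE 0)
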